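/- arXiv:1909.03327 — 2 statements merged into one kernel-verified Lean document; each statement's English description precedes it below -/
import Mathlib

section
/- Let u be a real number with u ≠ 0 and 3 + 2u ≠ 0, set η(u) = −6u/(3 + 2u) and β₄(u) = (1 − 2η(u))u + (2/3)u²(4 + η(u)). Then β₄(u) = 0 if and only if 4u² + 66u + 9 = 0, if and only if u = (−33 + √1053)/4 or u = (−33 − √1053)/4. Moreover (−33 + √1053)/4 lies in the open interval (−0.15, −0.13) and (−33 − √1053)/4 lies in the open interval (−16.4, −16.3). -/
/-- Anomalous dimension in the LPA of the quartic matrix-model FRG flow. -/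
noncomputable def etaLPA (u : ℝ) : ℝ := -6 * u / (3 + 2 * u)

/-- Quartic beta function at truncation order `k = 6`. -/
noncomputable def beta4LPA (u : ℝ) : ℝ :=
  (1 - 2 * etaLPA u) * u + (2 / 3) * u ^ 2 * (4 + etaLPA u)

theorem quadratic_two_mul_eq_zero_iff {K : Type*} [Field K] {a b c s : K} (ha : a ≠ 0)
    (hs : b ^ 2 - a * c = s ^ 2) (x : K) :
    a * x ^ 2 + 2 * b * x + c = 0 ↔ x = (-b + s) / a ∨ x = (-b - s) / a := by
  have hfactor : a * (a * x ^ 2 + 2 * b * x + c) = (x * a - (-b + s)) * (x * a - (-b - s)) := by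
    linear_combination -hs
  rw [← mul_eq_zero_iff_left ha, hfactor, mul_eq_zero, sub_eq_zero, sub_eq_zero,
    eq_div_iff ha, eq_div_iff ha]

theorem beta4LPA_eq_div {u : ℝ} (h : 3 + 2 * u ≠ 0) :
    beta4LPA u = u * (4 * u ^ 2 + 66 * u + 9) / (3 * (3 + 2 * u)) := by
  unfold beta4LPA etaLPA
  field_simp
  ring

theorem beta4LPA_eq_zero_iff {u : ℝ} (h : 3 + 2 * u ≠ 0) :
    beta4LPA u = 0 ↔ u = 0 ∨ 4 * u ^ 2 + 66 * u + 9 = 0 := by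
  have hden : 3 * (3 + 2 * u) ≠ 0 := mul_ne_zero three_ne_zero h
  rw [beta4LPA_eq_div h, div_eq_zero_iff, or_iff_left hden, mul_eq_zero]

theorem beta4_quadratic_eq_zero_iff (u : ℝ) :
    4 * u ^ 2 + 66 * u + 9 = 0 ↔ u = (-33 + √1053) / 4 ∨ u = (-33 - √1053) / 4 := by
  have hdiscrim : (33 : ℝ) ^ 2 - 4 * 9 = √1053 ^ 2 := by
    rw [Real.sq_sqrt (by norm_num)]
    norm_num
  have hcoeff : (66 : ℝ) = 2 * 33 := by norm_num
  rw [hcoeff, quadratic_two_mul_eq_zero_iff four_ne_zero hdiscrim]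

-- The endpoints are `33 - 4 * 0.15` and `33 - 4 * 0.13`, as the root near `-0.14` requires.
theorem sqrt_1053_mem_Ioo : √1053 ∈ Set.Ioo (32.4 : ℝ) 32.48 :=
  ⟨Real.lt_sqrt_of_sq_lt (by norm_num), (Real.sqrt_lt' (by norm_num)).mpr (by norm_num)⟩

/-- The two nonzero fixed points of the `k = 6` LPA truncation are the roots of
`4u² + 66u + 9 = 0`, lying near `-0.14` and `-16.36`. -/
theorem beta4_fixed_points (u : ℝ) (hu : u ≠ 0) (h : 3 + 2 * u ≠ 0) :
    (beta4LPA u = 0 ↔ 4 * u ^ 2 + 66 * u + 9 = 0) ∧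
    (4 * u ^ 2 + 66 * u + 9 = 0 ↔
      u = (-33 + Real.sqrt 1053) / 4 ∨ u = (-33 - Real.sqrt 1053) / 4) ∧
    (-33 + Real.sqrt 1053) / 4 ∈ Set.Ioo (-0.15 : ℝ) (-0.13) ∧
    (-33 - Real.sqrt 1053) / 4 ∈ Set.Ioo (-16.4 : ℝ) (-16.3) := by
  obtain ⟨hlower, hupper⟩ := sqrt_1053_mem_Ioo
  refine ⟨?_, beta4_quadratic_eq_zero_iff u, ⟨?_, ?_⟩, ⟨?_, ?_⟩⟩
  · rw [beta4LPA_eq_zero_iff h, or_iff_right hu]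
  all_goals linarith
end

section
/- Define η(u) = −6u/(3 + 2u), β₄(u, w) = (1 − 2η(u))u + (2/3)u²(4 + η(u)) − 4w(1 + η(u)/3), and β₆(u, w) = (2 − 3η(u) + 2u(4 + η(u)))w − 3u³(1 + η(u)/5), for real u with 3 + 2u ≠ 0 and real w. Then there exist real numbers u ∈ (−0.11, −0.09) and w ∈ (−0.01, 0) with β₄(u, w) = 0 and β₆(u, w) = 0. -/
/-- Quartic beta function at truncation order `k = 8`. -/
noncomputable def beta4 (u w : ℝ) : ℝ :=
  (1 - 2 * etaLPA u) * u + (2 / 3) * u ^ 2 * (4 + etaLPA u) - 4 * w * (1 + etaLPA u / 3)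

/-- Sextic beta function at truncation order `k = 8`. -/
noncomputable def beta6 (u w : ℝ) : ℝ :=
  (2 - 3 * etaLPA u + 2 * u * (4 + etaLPA u)) * w - 3 * u ^ 3 * (1 + etaLPA u / 5)

/-
Off the pole `3 + 2u = 0`, the equation `β₄ = 0` is linear in `w` with nonzero leading coefficient,
so it determines `w` as a cubic polynomial in `u`. Along this curve, `(3 + 2u) β₆` is a polynomial
in `u` divisible by `u`. The root `u = 0` is the Gaussian fixed point; the remaining quartic factor
changes sign between `u = -0.11` and `u = -0.09`.
-/

/-- The solution `w` of `beta4 u w = 0` as a function of `u`, away from the pole `3 + 2 * u = 0`: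
the curve on which the quartic coupling does not flow, used to eliminate `w` from the fixed-point
equations. -/
noncomputable def quarticNullcline (u : ℝ) : ℝ :=
  u / 4 + 11 / 6 * u ^ 2 + u ^ 3 / 9

/-- The polynomial whose roots are the `u`-coordinates of the non-Gaussian fixed points: it is
`(3 + 2 * u) * beta6 u w` on the quartic nullcline, with the Gaussian factor `u` removed. -/
noncomputable def nonGaussianPoly (u : ℝ) : ℝ :=
  3 / 2 + 45 / 2 * u + 77 * u ^ 2 + 452 / 45 * u ^ 3 + 4 / 9 * u ^ 4

lemma beta4_eq_div {u : ℝ} (hu : 3 + 2 * u ≠ 0) (w : ℝ) :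
    beta4 u w = 12 * (quarticNullcline u - w) / (3 + 2 * u) := by
  unfold beta4 etaLPA quarticNullcline
  field_simp
  ring

lemma beta4_eq_zero_iff {u w : ℝ} (hu : 3 + 2 * u ≠ 0) :
    beta4 u w = 0 ↔ w = quarticNullcline u := by
  rw [beta4_eq_div hu, div_eq_zero_iff, or_iff_left hu, mul_eq_zero_iff_left (by norm_num),
    sub_eq_zero, eq_comm]

lemma beta6_quarticNullcline {u : ℝ} (hu : 3 + 2 * u ≠ 0) :
    beta6 u (quarticNullcline u) = u * nonGaussianPoly u / (3 + 2 * u) := by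
  unfold beta6 etaLPA quarticNullcline nonGaussianPoly
  field_simp
  ring

lemma beta4_beta6_eq_zero_iff {u w : ℝ} (hu : 3 + 2 * u ≠ 0) (hu₀ : u ≠ 0) :
    beta4 u w = 0 ∧ beta6 u w = 0 ↔ w = quarticNullcline u ∧ nonGaussianPoly u = 0 := by
  rw [beta4_eq_zero_iff hu]
  refine and_congr_right fun hw ↦ ?_
  rw [hw, beta6_quarticNullcline hu, div_eq_zero_iff, or_iff_left hu, mul_eq_zero_iff_left hu₀]

lemma continuous_nonGaussianPoly : Continuous nonGaussianPoly := by
  unfold nonGaussianPoly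
  fun_prop

lemma exists_nonGaussianPoly_eq_zero :
    ∃ u ∈ Set.Ioo (-0.11 : ℝ) (-0.09), nonGaussianPoly u = 0 := by
  have h_left : nonGaussianPoly (-0.11) < 0 := by norm_num [nonGaussianPoly]
  have h_right : 0 < nonGaussianPoly (-0.09) := by norm_num [nonGaussianPoly]
  exact intermediate_value_Ioo (by norm_num) continuous_nonGaussianPoly.continuousOn
    ⟨h_left, h_right⟩

lemma quarticNullcline_mem_Ioo {u : ℝ} (hu : u ∈ Set.Ioo (-0.11 : ℝ) (-0.09)) :
    quarticNullcline u ∈ Set.Ioo (-0.01 : ℝ) 0 := by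
  obtain ⟨h_left, h_right⟩ := hu
  have h_factor : quarticNullcline u = u * (1 / 4 + 11 / 6 * u + u ^ 2 / 9) := by
    unfold quarticNullcline
    ring
  have h_sq : u ^ 2 < 0.11 ^ 2 := sq_lt_sq' h_left (by linarith)
  have h_pos : 0 < 1 / 4 + 11 / 6 * u + u ^ 2 / 9 := by linarith [sq_nonneg u]
  have h_lt : 1 / 4 + 11 / 6 * u + u ^ 2 / 9 < 0.09 := by linarith
  have h_mul : -u * (1 / 4 + 11 / 6 * u + u ^ 2 / 9) < 0.11 * 0.09 :=
    mul_lt_mul'' (by linarith) h_lt (by linarith) h_pos.le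
  rw [h_factor]
  exact ⟨by linarith, mul_neg_of_neg_of_pos (by linarith) h_pos⟩

/-- Existence of the fixed point `p₂ ≈ (-0.101, -0.007)` of the `k = 8` LPA truncation. -/
theorem fixed_point_p2 :
    ∃ u w : ℝ, u ∈ Set.Ioo (-0.11 : ℝ) (-0.09) ∧ w ∈ Set.Ioo (-0.01 : ℝ) 0 ∧
      3 + 2 * u ≠ 0 ∧ beta4 u w = 0 ∧ beta6 u w = 0 := by
  obtain ⟨u, hu, h_root⟩ := exists_nonGaussianPoly_eq_zero
  have h_pole : 3 + 2 * u ≠ 0 := by linarith [hu.1]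
  have h_ne : u ≠ 0 := by linarith [hu.2]
  exact ⟨u, quarticNullcline u, hu, quarticNullcline_mem_Ioo hu, h_pole,
    (beta4_beta6_eq_zero_iff h_pole h_ne).2 ⟨rfl, h_root⟩⟩
end
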